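/- arXiv:2601.13347 — 2 statements merged into one kernel-verified Lean document; each statement's English description precedes it below -/
import Mathlib

section
/- Let R be an m×m symmetric positive definite real matrix, Σ an n×n symmetric positive definite real matrix, H an m×n real matrix, μ ∈ ℝⁿ and y ∈ ℝᵐ. Define C := (Hᵀ R⁻¹ H + Σ⁻¹)⁻¹ and x* := μ + C Hᵀ R⁻¹ (y − H μ). Then for every x ∈ ℝⁿ, ‖y − H x‖²_R + ‖x − μ‖²_Σ = (x − x*)ᵀ C⁻¹ (x − x*) + (y − H μ)ᵀ (H Σ Hᵀ + R)⁻¹ (y − H μ). In particular, the Gaussian posterior density proportional to exp(−½(‖y − Hx‖²_R + ‖x − μ‖²_Σ)) is the density of a Gaussian with mean x* and covariance C. -/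
/-!
Write `Σ` for `Sig`. With `d = y - H μ`, `u = x - μ` and `g = Hᵀ R⁻¹ d`, one has `y - H x = d - H u` and
`x - xstar = u - C g`. Expanding by bilinearity and symmetry of `R⁻¹` and `C`, both sides share
`u ⬝ C⁻¹ u - 2 u ⬝ g`, and the remaining identity `d ⬝ R⁻¹ d = g ⬝ C g + d ⬝ (H Σ Hᵀ + R)⁻¹ d`
is the Woodbury formula `(R + H Σ Hᵀ)⁻¹ = R⁻¹ - R⁻¹ H C Hᵀ R⁻¹`.
-/

open Matrix

/-- Completion of squares for the Gaussian posterior: the sum of the data-fidelity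
and prior weighted squared norms equals the posterior quadratic form centered at
`xstar` with precision `C⁻¹`, plus the evidence term. Hence the posterior density
proportional to `exp(-½(‖y - Hx‖²_R + ‖x - μ‖²_Σ))` is Gaussian with mean `xstar`
and covariance `C`. -/
theorem gaussian_posterior_complete_square {m n : ℕ}
    (R : Matrix (Fin m) (Fin m) ℝ) (Sig : Matrix (Fin n) (Fin n) ℝ)
    (H : Matrix (Fin m) (Fin n) ℝ) (μ : Fin n → ℝ) (y : Fin m → ℝ)
    (hR : R.PosDef) (hSig : Sig.PosDef)
    (C : Matrix (Fin n) (Fin n) ℝ) (hC : C = (Hᵀ * R⁻¹ * H + Sig⁻¹)⁻¹)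
    (xstar : Fin n → ℝ)
    (hxstar : xstar = μ + (C * Hᵀ * R⁻¹) *ᵥ (y - H *ᵥ μ)) :
    ∀ x : Fin n → ℝ,
      (y - H *ᵥ x) ⬝ᵥ R⁻¹ *ᵥ (y - H *ᵥ x) + (x - μ) ⬝ᵥ Sig⁻¹ *ᵥ (x - μ)
        = (x - xstar) ⬝ᵥ C⁻¹ *ᵥ (x - xstar)
          + (y - H *ᵥ μ) ⬝ᵥ (H * Sig * Hᵀ + R)⁻¹ *ᵥ (y - H *ᵥ μ) := by
  intro x
  have hP : (Hᵀ * R⁻¹ * H + Sig⁻¹).PosDef := by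
    have h := hR.inv.posSemidef.conjTranspose_mul_mul_same H
    rw [conjTranspose_eq_transpose_of_trivial] at h
    exact Matrix.PosDef.posSemidef_add h hSig.inv
  have hCinv : C⁻¹ = Hᵀ * R⁻¹ * H + Sig⁻¹ := by
    rw [hC, nonsing_inv_nonsing_inv _ ((isUnit_iff_isUnit_det _).mp hP.isUnit)]
  have hCC : C⁻¹ * C = 1 := by
    rw [hCinv, hC, mul_nonsing_inv _ ((isUnit_iff_isUnit_det _).mp hP.isUnit)]
  have hRt : (R⁻¹)ᵀ = R⁻¹ := by
    simpa [conjTranspose_eq_transpose_of_trivial] using hR.inv.isHermitian.eq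
  have hCt : Cᵀ = C := by
    rw [hC]
    simpa only [conjTranspose_eq_transpose_of_trivial] using hP.inv.isHermitian.eq
  have hW : (H * Sig * Hᵀ + R)⁻¹ = R⁻¹ - R⁻¹ * H * C * Hᵀ * R⁻¹ := by
    rw [add_comm, add_mul_mul_inv_eq_sub R H Sig Hᵀ hR.isUnit hSig.isUnit
      (by rw [add_comm]; exact hP.isUnit), hC, add_comm Sig⁻¹]
  obtain ⟨d, hd⟩ : ∃ d, d = y - H *ᵥ μ := ⟨_, rfl⟩
  obtain ⟨u, hu⟩ : ∃ u, u = x - μ := ⟨_, rfl⟩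
  have h1 : y - H *ᵥ x = d - H *ᵥ u := by
    rw [hd, hu, mulVec_sub]; abel
  have h2 : x - xstar = u - C *ᵥ (Hᵀ *ᵥ (R⁻¹ *ᵥ d)) := by
    rw [hxstar, ← hd, hu]; simp only [mulVec_mulVec, Matrix.mul_assoc]; abel
  rw [h1, h2, ← hd, ← hu, hW]
  -- adjoint relations, for moving every factor to the right of the dot product
  have aH : ∀ (v : Fin n → ℝ) (w : Fin m → ℝ), H *ᵥ v ⬝ᵥ w = v ⬝ᵥ Hᵀ *ᵥ w := fun v w => by
    rw [dotProduct_mulVec, vecMul_transpose]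
  have aHt : ∀ (v : Fin m → ℝ) (w : Fin n → ℝ), Hᵀ *ᵥ v ⬝ᵥ w = v ⬝ᵥ H *ᵥ w := fun v w => by
    rw [dotProduct_mulVec, mulVec_transpose]
  have aR : ∀ v w : Fin m → ℝ, R⁻¹ *ᵥ v ⬝ᵥ w = v ⬝ᵥ R⁻¹ *ᵥ w := fun v w => by
    rw [dotProduct_mulVec, ← mulVec_transpose, hRt]
  have aC : ∀ v w : Fin n → ℝ, C *ᵥ v ⬝ᵥ w = v ⬝ᵥ C *ᵥ w := fun v w => by
    rw [dotProduct_mulVec, ← mulVec_transpose, hCt]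
  have hCv : ∀ v : Fin n → ℝ, C⁻¹ *ᵥ (C *ᵥ v) = v := fun v => by
    rw [mulVec_mulVec, hCC, one_mulVec]
  have hCv' : ∀ v : Fin n → ℝ, C *ᵥ (C⁻¹ *ᵥ v) = v := fun v => by
    rw [mulVec_mulVec, mul_eq_one_comm.mp hCC, one_mulVec]
  have hquad : u ⬝ᵥ C⁻¹ *ᵥ u
      = u ⬝ᵥ Hᵀ *ᵥ (R⁻¹ *ᵥ (H *ᵥ u)) + u ⬝ᵥ Sig⁻¹ *ᵥ u := by
    rw [hCinv, add_mulVec, dotProduct_add]; simp only [mulVec_mulVec, Matrix.mul_assoc]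
  have hcross : d ⬝ᵥ R⁻¹ *ᵥ (H *ᵥ u) = u ⬝ᵥ Hᵀ *ᵥ (R⁻¹ *ᵥ d) := by
    rw [← aR, ← aHt, dotProduct_comm]
  have hWd : (R⁻¹ - R⁻¹ * H * C * Hᵀ * R⁻¹) *ᵥ d
      = R⁻¹ *ᵥ d - R⁻¹ *ᵥ (H *ᵥ (C *ᵥ (Hᵀ *ᵥ (R⁻¹ *ᵥ d)))) := by
    rw [sub_mulVec]; simp only [mulVec_mulVec, Matrix.mul_assoc]
  rw [hWd]
  simp only [mulVec_sub, dotProduct_sub, sub_dotProduct, hCv, hCv', aH, aHt, aR, aC, hquad, hcross]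
  ring
end

section
/- Let R be an m×m symmetric positive definite real matrix, H an m×n real matrix, P an n×r real matrix, μ ∈ ℝⁿ and y ∈ ℝᵐ. Define Ψ := ((H P)ᵀ R⁻¹ (H P) + I_r)⁻¹ and α* := Ψ (H P)ᵀ R⁻¹ (y − H μ). Then (H P)ᵀ R⁻¹ (H P) + I_r is symmetric positive definite, and for every α ∈ ℝʳ, ‖y − H(μ + P α)‖²_R + ‖α‖²₂ = (α − α*)ᵀ Ψ⁻¹ (α − α*) + (y − H μ)ᵀ ((H P)(H P)ᵀ + R)⁻¹ (y − H μ). In particular, the projected posterior density proportional to exp(−½(‖y − H(μ + Pα)‖²_R + ‖α‖²)) is Gaussian with mean α* and covariance Ψ. -/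
/-!
With `G = H P`, `d = y - H μ` and `M = Gᵀ R⁻¹ G + 1`, the minimiser `α*` satisfies
`M α* = Gᵀ R⁻¹ d`. The weighted residual `w = R⁻¹ (d - G α*)` then satisfies the normal equation
`Gᵀ w = α*`, and hence `(G Gᵀ + R) w = G α* + (d - G α*) = d`, so `w = (G Gᵀ + R)⁻¹ d`; this takes
the place of the Woodbury identity. Expanding the objective around `α*`, with `β = α - α*`, the
cross terms cancel by the normal equation, the quadratic terms give `βᵀ M β`, and the constant is
`(d - G α*)ᵀ w + α*ᵀ α* = dᵀ w`.
-/

open Matrix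

/-- Expansion of the regularised least-squares objective around a point `a` satisfying the normal
equation `Gᵀ Q (d - G a) = a`. -/
lemma complete_square_of_normal_eq {m r : ℕ} (Q : Matrix (Fin m) (Fin m) ℝ)
    (G : Matrix (Fin m) (Fin r) ℝ) (d : Fin m → ℝ) (a b : Fin r → ℝ) (hQ : Qᵀ = Q)
    (ha : Gᵀ *ᵥ (Q *ᵥ (d - G *ᵥ a)) = a) :
    (d - G *ᵥ (a + b)) ⬝ᵥ Q *ᵥ (d - G *ᵥ (a + b)) + (a + b) ⬝ᵥ (a + b)
      = b ⬝ᵥ (Gᵀ * Q * G + 1) *ᵥ b + d ⬝ᵥ Q *ᵥ (d - G *ᵥ a) := by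
  have hadj (x : Fin r → ℝ) (v : Fin m → ℝ) : (G *ᵥ x) ⬝ᵥ v = x ⬝ᵥ Gᵀ *ᵥ v := by
    rw [dotProduct_mulVec, vecMul_transpose]
  have hsymm (u v : Fin m → ℝ) : u ⬝ᵥ Q *ᵥ v = v ⬝ᵥ Q *ᵥ u := by
    rw [dotProduct_mulVec, ← mulVec_transpose, hQ, dotProduct_comm]
  have hd : d ⬝ᵥ Q *ᵥ (d - G *ᵥ a)
      = (d - G *ᵥ a) ⬝ᵥ Q *ᵥ (d - G *ᵥ a) + a ⬝ᵥ a := by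
    conv_rhs => rw [sub_dotProduct, hadj a, ha]
    ring
  have hsplit : d - G *ᵥ (a + b) = (d - G *ᵥ a) - G *ᵥ b := by
    rw [mulVec_add]; abel
  have hcross : (G *ᵥ b) ⬝ᵥ Q *ᵥ (d - G *ᵥ a) = b ⬝ᵥ a := by rw [hadj, ha]
  have hquad : b ⬝ᵥ (Gᵀ * Q * G + 1) *ᵥ b = (G *ᵥ b) ⬝ᵥ Q *ᵥ (G *ᵥ b) + b ⬝ᵥ b := by
    rw [add_mulVec, one_mulVec, dotProduct_add, hadj, mulVec_mulVec, mulVec_mulVec,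
      Matrix.mul_assoc]
  rw [hd, hquad, hsplit]
  generalize d - G *ᵥ a = e at *
  rw [mulVec_sub, sub_dotProduct, dotProduct_sub, dotProduct_sub, hsymm e (G *ᵥ b), hcross,
    add_dotProduct, dotProduct_add, dotProduct_add, dotProduct_comm a b]
  ring

/-- Completion of squares for the projected posterior: `(HP)ᵀR⁻¹(HP) + I` is
symmetric positive definite, and the projected negative log-posterior decomposes
into a quadratic form centered at `αstar` with precision `Ψ⁻¹` plus the evidence
term; hence the projected posterior is Gaussian with mean `αstar` and
covariance `Ψ`. -/
theorem projected_gaussian_posterior_complete_square {m n r : ℕ}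
    (R : Matrix (Fin m) (Fin m) ℝ) (H : Matrix (Fin m) (Fin n) ℝ)
    (P : Matrix (Fin n) (Fin r) ℝ) (μ : Fin n → ℝ) (y : Fin m → ℝ)
    (hR : R.PosDef)
    (Ψ : Matrix (Fin r) (Fin r) ℝ)
    (hΨ : Ψ = ((H * P)ᵀ * R⁻¹ * (H * P) + 1)⁻¹)
    (αstar : Fin r → ℝ)
    (hα : αstar = (Ψ * (H * P)ᵀ * R⁻¹) *ᵥ (y - H *ᵥ μ)) :
    ((H * P)ᵀ * R⁻¹ * (H * P) + 1).PosDef ∧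
    ∀ α : Fin r → ℝ,
      (y - H *ᵥ (μ + P *ᵥ α)) ⬝ᵥ R⁻¹ *ᵥ (y - H *ᵥ (μ + P *ᵥ α)) + α ⬝ᵥ α
        = (α - αstar) ⬝ᵥ Ψ⁻¹ *ᵥ (α - αstar)
          + (y - H *ᵥ μ) ⬝ᵥ ((H * P) * (H * P)ᵀ + R)⁻¹ *ᵥ (y - H *ᵥ μ) := by
  have hM : ((H * P)ᵀ * R⁻¹ * (H * P) + 1).PosDef := by
    refine PosDef.posSemidef_add ?_ PosDef.one
    have h := hR.inv.posSemidef.conjTranspose_mul_mul_same (H * P)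
    rwa [conjTranspose_eq_transpose_of_trivial] at h
  have hS : ((H * P) * (H * P)ᵀ + R).PosDef := by
    refine PosDef.posSemidef_add ?_ hR
    have h := posSemidef_self_mul_conjTranspose (H * P)
    rwa [conjTranspose_eq_transpose_of_trivial] at h
  refine ⟨hM, fun α => ?_⟩
  have hMu := (Matrix.isUnit_iff_isUnit_det _).mp hM.isUnit
  have hSu := (Matrix.isUnit_iff_isUnit_det _).mp hS.isUnit
  have hRu := (Matrix.isUnit_iff_isUnit_det _).mp hR.isUnit
  have hQ : (R⁻¹)ᵀ = R⁻¹ := by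
    have h := hR.inv.isHermitian.eq
    rwa [conjTranspose_eq_transpose_of_trivial] at h
  have hres : y - H *ᵥ (μ + P *ᵥ α) = (y - H *ᵥ μ) - (H * P) *ᵥ α := by
    rw [mulVec_add, mulVec_mulVec]; abel
  have hΨinv : Ψ⁻¹ = (H * P)ᵀ * R⁻¹ * (H * P) + 1 := by
    rw [hΨ, nonsing_inv_nonsing_inv _ hMu]
  rw [hres, hΨinv]
  generalize y - H *ᵥ μ = d at *
  generalize H * P = G at *
  have hMα : (Gᵀ * R⁻¹ * G + 1) *ᵥ αstar = (Gᵀ * R⁻¹) *ᵥ d := by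
    rw [hα, hΨ, mulVec_mulVec, Matrix.mul_assoc _ Gᵀ, mul_nonsing_inv_cancel_left _ _ hMu]
  have hnormal : Gᵀ *ᵥ (R⁻¹ *ᵥ (d - G *ᵥ αstar)) = αstar := by
    rw [mulVec_mulVec, mulVec_sub, ← hMα, mulVec_mulVec, add_mulVec, one_mulVec]
    abel
  -- The weighted residual solves the evidence system `(G Gᵀ + R) w = d`.
  have hw : (G * Gᵀ + R)⁻¹ *ᵥ d = R⁻¹ *ᵥ (d - G *ᵥ αstar) := by
    have h : (G * Gᵀ + R) *ᵥ (R⁻¹ *ᵥ (d - G *ᵥ αstar)) = d := by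
      rw [add_mulVec, ← mulVec_mulVec, hnormal, mulVec_mulVec, mul_nonsing_inv _ hRu, one_mulVec]
      abel
    conv_lhs => rw [← h]
    rw [mulVec_mulVec, nonsing_inv_mul _ hSu, one_mulVec]
  have key := complete_square_of_normal_eq R⁻¹ G d αstar (α - αstar) hQ hnormal
  rw [add_sub_cancel] at key
  rw [hw, key]
end
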